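/- (Hytönen–Kairema dyadic cubes) Let (X,d) be a geometrically doubling metric space. Fix constants 0 < c₀ < C₀ < ∞ and δ > 1 such that 18 C₀ δ^{−1} ≤ c₀. For each k ∈ ℤ let I_k be an index set and let {z_α^k ∈ X : α ∈ I_k, k ∈ ℤ} be a collection of points such that d(z_α^k, z_β^k) ≥ c₀ δ^k whenever α ≠ β, and for every x ∈ X and every k ∈ ℤ there exists α ∈ I_k with d(x, z_α^k) < C₀ δ^k. Then, with a₀ := c₀/3 and C₁ := 2C₀, there exists a family of sets {Q_α^k : α ∈ I_k, k ∈ ℤ} such that: (1) for every k ∈ ℤ, ∪_{α ∈ I_k} Q_α^k = X; (2) if k ≤ l then for all α ∈ I_k, β ∈ I_l, either Q_α^k ⊆ Q_β^l or Q_α^k ∩ Q_β^l = ∅; (3) for each pair (k,α) and each integer n > k there is a unique β ∈ I_n with Q_α^k ⊆ Q_β^n; (4) B(z_α^k, a₀ δ^k) ⊆ Q_α^k ⊆ B(z_α^k, C₁ δ^k) for all k ∈ ℤ and α ∈ I_k. -/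

import Mathlib

open MeasureTheory Metric ENNReal

lemma aux_cover {X : Type*} [MetricSpace X] (D₀ : ℕ)
    (hgd : ∀ (x : X) (r : ℝ), 0 < r → ∃ s : Finset X, s.card ≤ D₀ ∧
      closedBall x r ⊆ ⋃ y ∈ s, closedBall y (r / 2)) (n : ℕ) :
    ∀ (x : X) (r : ℝ), 0 < r → ∃ t : Set X, t.Finite ∧
      closedBall x r ⊆ ⋃ y ∈ t, closedBall y (r / 2 ^ n) := by
  induction n with
  | zero => 
    intro x r hr
    exact ⟨{x}, Set.finite_singleton x, by simp⟩
  | succ n ih =>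
    intro x r hr
    obtain ⟨s, -, hs⟩ := hgd x r hr
    choose t ht htc using fun y : X => ih y (r / 2) (by positivity)
    refine ⟨⋃ y ∈ s, t y, s.finite_toSet.biUnion (fun y _ => ht y), ?_⟩
    intro w hw
    have h1 := hs hw
    simp only [Set.mem_iUnion] at h1
    obtain ⟨y, hy, hwy⟩ := h1
    have h2 := htc y hwy
    simp only [Set.mem_iUnion] at h2
    obtain ⟨v, hv, hwv⟩ := h2
    simp only [Set.mem_iUnion]
    refine ⟨v, ⟨y, hy, hv⟩, ?_⟩
    have : r / 2 ^ (n + 1) = r / 2 / 2 ^ n := by rw [pow_succ]; field_simp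
    rw [this]; exact hwv

lemma aux_finite {X : Type*} [MetricSpace X] (D₀ : ℕ)
    (hgd : ∀ (x : X) (r : ℝ), 0 < r → ∃ s : Finset X, s.card ≤ D₀ ∧
      closedBall x r ⊆ ⋃ y ∈ s, closedBall y (r / 2))
    {J : Type*} (z : J → X) (e : ℝ) (he : 0 < e)
    (hz : ∀ a b : J, a ≠ b → e ≤ dist (z a) (z b)) (x : X) (r : ℝ) (hr : 0 < r) :
    {a : J | dist x (z a) ≤ r}.Finite := by
  obtain ⟨n, hn⟩ := exists_nat_gt (2 * r / e)
  have hn2 : (n : ℝ) < 2 ^ n := by exact_mod_cast Nat.lt_two_pow_self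
  obtain ⟨t, ht, htc⟩ := aux_cover D₀ hgd n x r hr
  have hsmall : 2 * (r / 2 ^ n) < e := by
    have : 2 * r / e < 2 ^ n := hn.trans hn2
    rw [div_lt_iff₀ he] at this
    rw [← mul_div_assoc, div_lt_iff₀ (by positivity)]
    linarith
  have hc : ∀ a : {a : J | dist x (z a) ≤ r}, ∃ y : t, dist (z a) y ≤ r / 2 ^ n := by
    rintro ⟨a, ha⟩
    have : z a ∈ closedBall x r := by rw [mem_closedBall, dist_comm]; exact ha
    have h2 := htc this
    simp only [Set.mem_iUnion] at h2
    obtain ⟨v, hv, hwv⟩ := h2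
    exact ⟨⟨v, hv⟩, hwv⟩
  choose f hf using hc
  have := ht.to_subtype
  have hinj : Function.Injective f := by
    intro a b hab
    by_contra hne
    have h1 := hz a b (fun h => hne (Subtype.ext h))
    have h2 := hf a
    have h3 := hf b
    rw [← hab] at h3
    have h4 := dist_triangle_right (z a) (z b) (f a : X)
    linarith
  have := Finite.of_injective f hinj
  exact Set.toFinite _

lemma aux_chain (I : ℤ → Type*) (p : ∀ k, I k → I (k + 1)) (F : ∀ k, Set (I k))
    (hne : ∀ k, (F k).Nonempty) (hF : ∀ k a, a ∈ F k → p k a ∈ F (k + 1)) (m : ℤ) (n : ℤ)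
    (hmn : m ≤ n) :
    ∃ b : ∀ k, I k, (∀ k, b k ∈ F k) ∧ ∀ k, m ≤ k → k < n → b (k + 1) = p k (b k) := by
  induction n, hmn using Int.le_induction with
  | base => 
    choose b hb using hne
    exact ⟨b, hb, fun k h1 h2 => by omega⟩
  | succ n hmn ih =>
    obtain ⟨b, hb, hc⟩ := ih
    refine ⟨Function.update b (n + 1) (p n (b n)), ?_, ?_⟩
    · intro k
      by_cases h : k = n + 1
      · subst h
        rw [Function.update_self]
        exact hF _ _ (hb n)
      · rw [Function.update_of_ne h]
        exact hb k
    · intro k h1 h2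
      rw [Function.update_of_ne (by omega : k ≠ n + 1)]
      by_cases h : k = n
      · subst h
        rw [Function.update_self]
      · rw [Function.update_of_ne (by omega)]
        exact hc k h1 (by omega)

lemma aux_section (I : ℤ → Type*) (p : ∀ k, I k → I (k + 1)) (F : ∀ k, Set (I k))
    (hfin : ∀ k, (F k).Finite)
    (hne : ∀ k, (F k).Nonempty) (hF : ∀ k a, a ∈ F k → p k a ∈ F (k + 1)) :
    ∃ b : ∀ k, I k, (∀ k, b k ∈ F k) ∧ ∀ k, b (k + 1) = p k (b k) := by
  choose b hb hc using fun n : ℕ => aux_chain I p F hne hF (-(n : ℤ)) n (by omega)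
  let U : Ultrafilter ℕ := Filter.hyperfilter ℕ
  have hU : (U : Filter ℕ) ≤ Filter.atTop := by
    rw [← Nat.cofinite_eq_atTop]; exact Filter.hyperfilter_le_cofinite
  have hlim : ∀ k, ∃ a ∈ F k, ∀ᶠ n in (U : Filter ℕ), b n k = a := by
    intro k
    have := (Ultrafilter.finite_biUnion_mem_iff (f := U) (hfin k)
      (s := fun a => {n | b n k = a})).1 (by
        refine Filter.mem_of_superset Filter.univ_mem ?_
        intro n _
        simp only [Set.mem_iUnion]
        exact ⟨b n k, hb n k, rfl⟩)
    exact this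
  choose A hA hAe using hlim
  refine ⟨A, hA, fun k => ?_⟩
  have h3 : ∀ᶠ n in (U : Filter ℕ), k.natAbs + 1 ≤ n :=
    hU (Filter.eventually_ge_atTop _)
  obtain ⟨n, h1, h2, h3⟩ := ((hAe k).and ((hAe (k + 1)).and h3)).exists
  rw [← h1, ← h2]
  exact hc n k (by omega) (by omega)

/-- **Hytönen–Kairema dyadic cubes.** Let `(X,d)` be a geometrically doubling
metric space, let `0 < c₀ < C₀ < ∞` and `δ > 1` with `18 C₀ δ⁻¹ ≤ c₀`, and let
`{z_α^k : α ∈ I_k, k ∈ ℤ}` be a collection of points that is `c₀ δ^k`-separated in each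
generation `k` and `C₀ δ^k`-dense. Then, with `a₀ = c₀/3` and `C₁ = 2C₀`, there is a family of
sets `Q_α^k` covering `X` in each generation, nested across generations, each cube having a
unique ancestor in every later generation, and sandwiched between the balls
`B(z_α^k, a₀ δ^k)` and `B(z_α^k, C₁ δ^k)`. -/
theorem stmt_8 {X : Type*} [MetricSpace X]
    (D₀ : ℕ)
    (hgd : ∀ (x : X) (r : ℝ), 0 < r → ∃ s : Finset X, s.card ≤ D₀ ∧
      closedBall x r ⊆ ⋃ y ∈ s, closedBall y (r / 2))
    (c₀ C₀ δ : ℝ) (hc₀ : 0 < c₀) (hcC : c₀ < C₀) (hδ : 1 < δ)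
    (hsep : 18 * C₀ * δ⁻¹ ≤ c₀)
    (I : ℤ → Type*) (z : ∀ k, I k → X)
    (hzsep : ∀ (k : ℤ) (α β : I k), α ≠ β → c₀ * δ ^ k ≤ dist (z k α) (z k β))
    (hzdense : ∀ (x : X) (k : ℤ), ∃ α : I k, dist x (z k α) < C₀ * δ ^ k) :
    ∃ Q : ∀ k : ℤ, I k → Set X,
      (∀ k : ℤ, (⋃ α : I k, Q k α) = Set.univ) ∧
      (∀ k l : ℤ, k ≤ l → ∀ (α : I k) (β : I l), Q k α ⊆ Q l β ∨ Q k α ∩ Q l β = ∅) ∧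
      (∀ (k : ℤ) (α : I k) (n : ℤ), k < n → ∃! β : I n, Q k α ⊆ Q n β) ∧
      (∀ (k : ℤ) (α : I k),
        closedBall (z k α) ((c₀ / 3) * δ ^ k) ⊆ Q k α ∧
        Q k α ⊆ closedBall (z k α) ((2 * C₀) * δ ^ k)) := by
  have hδ0 : 0 < δ := by linarith
  have hC : 0 < C₀ := by linarith
  have hpos : ∀ k : ℤ, 0 < δ ^ k := fun k => zpow_pos hδ0 k
  have h18 : 18 * C₀ ≤ c₀ * δ := by
    rw [← div_eq_mul_inv, div_le_iff₀ hδ0] at hsep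
    exact hsep
  have hδ18 : 18 ≤ δ := by
    by_contra h
    push Not at h
    nlinarith
  have hstep : ∀ k : ℤ, δ ^ (k + 1) = δ ^ k * δ := fun k => zpow_add_one₀ hδ0.ne' k
  have hpar : ∀ (k : ℤ) (α : I k), ∃ β : I (k + 1),
      dist (z k α) (z (k + 1) β) < C₀ * δ ^ (k + 1) ∧
      ∀ γ : I (k + 1), dist (z k α) (z (k + 1) γ) < c₀ / 2 * δ ^ (k + 1) → γ = β := by
    intro k α
    have hp := hpos (k + 1)
    by_cases h : ∃ β, dist (z k α) (z (k + 1) β) < c₀ / 2 * δ ^ (k + 1)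
    · obtain ⟨β, hβ⟩ := h
      refine ⟨β, by nlinarith, fun γ hγ => ?_⟩
      by_contra hne
      have h1 := hzsep (k + 1) γ β hne
      have h2 := dist_triangle_left (z (k + 1) γ) (z (k + 1) β) (z k α)
      linarith
    · obtain ⟨β, hβ⟩ := hzdense (z k α) (k + 1)
      exact ⟨β, hβ, fun γ hγ => absurd ⟨γ, hγ⟩ h⟩
  choose p hp1 hp2 using hpar
  have hsec : ∀ x : X, ∃ b : ∀ k, I k, (∀ k, dist x (z k (b k)) ≤ 2 * C₀ * δ ^ k) ∧
      ∀ k, b (k + 1) = p k (b k) := by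
    intro x
    refine aux_section I p (fun k => {a | dist x (z k a) ≤ 2 * C₀ * δ ^ k}) ?_ ?_ ?_
    · intro k
      have := hpos k
      exact aux_finite D₀ hgd (z k) (c₀ * δ ^ k) (by positivity) (hzsep k) x _ (by positivity)
    · intro k
      obtain ⟨a, ha⟩ := hzdense x k
      have : 0 < C₀ * δ ^ k := mul_pos hC (hpos k)
      exact ⟨a, by simp only [Set.mem_setOf_eq]; linarith⟩
    · intro k a ha
      simp only [Set.mem_setOf_eq] at ha ⊢
      have h1 := hp1 k a
      have h2 := dist_triangle x (z k a) (z (k + 1) (p k a))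
      have h3 : 0 < C₀ * δ ^ k := mul_pos hC (hpos k)
      rw [hstep] at h1 ⊢
      nlinarith
  choose A hA hAp using hsec
  have hAmono : ∀ (x y : X) (k l : ℤ), k ≤ l → A x k = A y k → A x l = A y l := by
    intro x y k l hkl h
    induction l, hkl using Int.le_induction with
    | base => exact h
    | succ l _ ih => rw [hAp, hAp, ih]
  have hball : ∀ (k : ℤ) (α : I k) (x : X), dist x (z k α) ≤ c₀ / 3 * δ ^ k → A x k = α := by
    intro k
    obtain ⟨j, rfl⟩ : ∃ j, k = j + 1 := ⟨k - 1, by ring⟩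
    intro α x hx
    rw [hAp]
    refine (hp2 j _ α ?_).symm
    have h1 := hA x j
    have h2 := dist_triangle_left (z j (A x j)) (z (j + 1) α) x
    have h3 := hpos j
    have h4 : 18 * C₀ * δ ^ j ≤ c₀ * δ * δ ^ j := by gcongr
    have h5 : 0 < c₀ * δ * δ ^ j := by positivity
    rw [hstep] at hx ⊢
    nlinarith
  have hself : ∀ (k : ℤ) (α : I k), A (z k α) k = α := fun k α => hball k α _ (by
    rw [dist_self]; have := hpos k; positivity)
  refine ⟨fun k α => {x | A x k = α}, ?_, ?_, ?_, ?_⟩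
  · intro k
    ext x
    simp
  · intro k l hkl α β
    rw [or_iff_not_imp_right]
    intro h
    obtain ⟨x, hx1, hx2⟩ := Set.nonempty_iff_ne_empty.2 h
    intro y hy
    exact (hAmono y x k l hkl (Eq.trans hy (Eq.symm hx1))).trans hx2
  · intro k α n hkn
    refine ⟨A (z k α) n, fun y hy => hAmono y _ k n hkn.le (Eq.trans hy (hself k α).symm), ?_⟩
    intro β hβ
    exact (hβ (hself k α)).symm
  · intro k α
    refine ⟨fun x hx => hball k α x hx, ?_⟩
    rintro x rfl
    exact hA x k
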